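/- arXiv:2509.21581 — 2 statements merged into one kernel-verified Lean document; each statement's English description precedes it below -/
import Mathlib

section
/- Let D, R_A, R_B be nonzero real numbers with D ≠ R_A, D ≠ −R_B, D·(D − R_A + R_B) ≠ 0, and suppose that J = (R_A − D)(R_B + D)/(D·(D − R_A + R_B)) satisfies J < −1. Let s ∈ {1, −1} be such that s·R_A·(R_A − D) > 0, and let β be a nonzero real number with coth²β = −J and β·D > 0. Define ε_A = s·(D/(R_A − D))·coth β and ε_B = s·(D/(R_B + D))·coth β. Then ε_A·R_A > 0 and ε_B·R_B > 0. -/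
/-!
The identity `J + 1 = R_A R_B / (D (D - R_A + R_B))` turns `J (J + 1) > 0` into the statement that
`R_A (R_A - D)` and `R_B (R_B + D)` have the same sign, so that the sign `s` chosen for `A` also
serves for `B`. Up to division by a square, `ε_A R_A` is the product of `s R_A (R_A - D) > 0` and
`D coth β > 0`, and likewise for `ε_B R_B`.
-/

theorem mul_pos_trans {R : Type*} [CommRing R] [LinearOrder R] [IsStrictOrderedRing R]
    {a b c : R} (hab : 0 < a * b) (hbc : 0 < b * c) : 0 < a * c := by
  have hprod : 0 < b ^ 2 * (a * c) := by
    linear_combination mul_pos hab hbc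
  exact pos_of_mul_pos_right hprod (sq_nonneg b)

section Field

variable {K : Type*} [Field K]

/-- The diffraction parameter `J` of a distance `D` and two radii of curvature `RA`, `RB`; its
position relative to `-1` and `0` decides the signs below. Since `x / 0 = 0`, it is `0` when
`D * (D - RA + RB) = 0`. -/
def diffractionParameter (D RA RB : K) : K :=
  (RA - D) * (RB + D) / (D * (D - RA + RB))

theorem diffractionParameter_add_one {D RA RB : K} (hden : D * (D - RA + RB) ≠ 0) :
    diffractionParameter D RA RB + 1 = RA * RB / (D * (D - RA + RB)) := by
  rw [diffractionParameter, div_add_one hden]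
  ring

theorem diffractionParameter_mul_add_one {D RA RB : K} (hden : D * (D - RA + RB) ≠ 0) :
    diffractionParameter D RA RB * (diffractionParameter D RA RB + 1) =
      (RA * (RA - D)) * (RB * (RB + D)) / (D * (D - RA + RB)) ^ 2 := by
  rw [diffractionParameter_add_one hden, diffractionParameter, div_mul_div_comm]
  ring

end Field

section OrderedField

variable {K : Type*} [Field K] [LinearOrder K] [IsStrictOrderedRing K]

theorem mul_pos_of_diffractionParameter_lt_neg_one_or_pos {D RA RB : K}
    (hJ : diffractionParameter D RA RB < -1 ∨ 0 < diffractionParameter D RA RB) :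
    0 < (RA * (RA - D)) * (RB * (RB + D)) := by
  have hJ_ne : diffractionParameter D RA RB ≠ 0 := by
    rcases hJ with hJ | hJ <;> linarith
  have hden : D * (D - RA + RB) ≠ 0 := (div_ne_zero_iff.1 hJ_ne).2
  have hprod : 0 < diffractionParameter D RA RB * (diffractionParameter D RA RB + 1) := by
    rcases hJ with hJ | hJ
    · exact mul_pos_of_neg_of_neg (by linarith) (by linarith)
    · positivity
  rw [diffractionParameter_mul_add_one hden] at hprod
  exact (div_pos_iff_of_pos_right (by positivity)).1 hprod

theorem mul_div_mul_mul_pos {s x y d c : K} (hxy : 0 < s * (x * y)) (hdc : 0 < d * c) :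
    0 < s * (d / y) * c * x := by
  have hy : y ≠ 0 := right_ne_zero_of_mul (right_ne_zero_of_mul hxy.ne')
  calc 0 < s * (x * y) * (d * c) / y ^ 2 := by positivity
    _ = s * (d / y) * c * x := by field_simp

theorem stmt13_general {D RA RB s c : K}
    (hJ : diffractionParameter D RA RB < -1 ∨ 0 < diffractionParameter D RA RB)
    (hs : 0 < s * (RA * (RA - D))) (hc : 0 < D * c) :
    0 < s * (D / (RA - D)) * c * RA ∧ 0 < s * (D / (RB + D)) * c * RB :=
  have hsB : 0 < s * (RB * (RB + D)) :=
    mul_pos_trans hs (mul_pos_of_diffractionParameter_lt_neg_one_or_pos hJ)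
  ⟨mul_div_mul_mul_pos hs hc, mul_div_mul_mul_pos hsB hc⟩

end OrderedField

theorem mul_cosh_div_sinh_pos {β : ℝ} (hβ : β ≠ 0) : 0 < β * (Real.cosh β / Real.sinh β) := by
  rcases hβ.lt_or_gt with hβ | hβ
  · exact mul_pos_of_neg_of_neg hβ
      (div_neg_of_pos_of_neg (Real.cosh_pos β) (Real.sinh_neg_iff.2 hβ))
  · exact mul_pos hβ (div_pos (Real.cosh_pos β) (Real.sinh_pos_iff.2 hβ))

/-- Lemma 3: for `J < −1`, with `s` the sign of `R_A(R_A − D)`, `coth²β = −J` and `βD > 0`,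
the parameters `ε_A = s·(D/(R_A − D))·coth β` and `ε_B = s·(D/(R_B + D))·coth β` satisfy
`ε_A·R_A > 0` and `ε_B·R_B > 0`. Here `coth β = cosh β / sinh β`. -/
theorem stmt13 (D RA RB : ℝ) (hD : D ≠ 0) (hRA : RA ≠ 0) (hRB : RB ≠ 0)
    (hDA : D ≠ RA) (hDB : D ≠ -RB) (hden : D * (D - RA + RB) ≠ 0)
    (hJ : (RA - D) * (RB + D) / (D * (D - RA + RB)) < -1)
    (s : ℝ) (hs : s = 1 ∨ s = -1) (hsgn : s * (RA * (RA - D)) > 0)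
    (β : ℝ) (hβ : β ≠ 0)
    (hcoth : (Real.cosh β / Real.sinh β) ^ 2 =
      -((RA - D) * (RB + D) / (D * (D - RA + RB))))
    (hβD : β * D > 0)
    (εA εB : ℝ)
    (hεA : εA = s * (D / (RA - D)) * (Real.cosh β / Real.sinh β))
    (hεB : εB = s * (D / (RB + D)) * (Real.cosh β / Real.sinh β)) :
    εA * RA > 0 ∧ εB * RB > 0 := by
  rw [hεA, hεB]
  exact stmt13_general (Or.inl hJ) hsgn
    (mul_pos_trans (mul_comm β D ▸ hβD) (mul_cosh_div_sinh_pos hβ))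
end

section
/- Let f ∈ 𝓢(ℝ², ℂ). Then for every ρ' ∈ ℝ², H_β[f](ρ') tends to f(ρ') as β tends to 0 through nonzero real values. That is, the hyperbolic fractional Fourier transformations of the first kind converge pointwise to the identity operator as the order tends to 0: H_0 = 𝓘. -/
open MeasureTheory Filter
open scoped RealInnerProductSpace

noncomputable section

/-- The Euclidean plane `ℝ²`. -/
abbrev Plane := EuclideanSpace ℝ (Fin 2)

/-- Hyperbolic fractional-order Fourier transformation of the first kind of order `β`
(for `β ≠ 0`), with `coth β = cosh β / sinh β`. -/
def fracH (β : ℝ) (f : Plane → ℂ) (ρ' : Plane) : ℂ :=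
  Complex.I * Real.exp β / Real.sinh β *
    Complex.exp (-(Complex.I * Real.pi * ‖ρ'‖ ^ 2 * (Real.cosh β / Real.sinh β))) *
    ∫ ρ : Plane,
      Complex.exp (-(Complex.I * Real.pi * ‖ρ‖ ^ 2 * (Real.cosh β / Real.sinh β))) *
      Complex.exp (2 * Real.pi * Complex.I * ⟪ρ', ρ⟫ / Real.sinh β) * f ρ

/-!
Write `f = 𝓕 h` with `h = 𝓕⁻ f`. The kernel of `H_β` is a modulated Fresnel kernel, the boundary
value on the imaginary axis of a Gaussian `exp (-b ‖v‖²)` with `0 < re b`, so the self-adjointness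
of `𝓕` moves the Fourier transform from `h` to the kernel. This replaces `coth β`, singular at
`β = 0`, by `tanh β`: `H_β[𝓕 h](ρ')` is `exp β / cosh β` times an oscillatory integral of `h` whose
phase is continuous in `β` and equals that of `𝓕 h ρ'` at `β = 0`. Dominated convergence concludes.
-/

open Complex (I)
open scoped FourierTransform Real Topology

section DominatedConvergence

variable {α ι E : Type*} [MeasurableSpace α] {μ : Measure α} [NormedAddCommGroup E]
  [NormedSpace ℂ E]

lemma tendsto_integral_cexp_smul {l : Filter ι} [l.IsCountablyGenerated] {a : ι → α → ℂ}
    {a₀ : α → ℂ} {φ : α → E} (hφ : Integrable φ μ)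
    (ha : ∀ᶠ i in l, AEStronglyMeasurable (a i) μ) (hre : ∀ᶠ i in l, ∀ᵐ v ∂μ, (a i v).re ≤ 0)
    (hlim : ∀ᵐ v ∂μ, Tendsto (fun i => a i v) l (𝓝 (a₀ v))) :
    Tendsto (fun i => ∫ v, Complex.exp (a i v) • φ v ∂μ) l
      (𝓝 (∫ v, Complex.exp (a₀ v) • φ v ∂μ)) := by
  refine tendsto_integral_filter_of_dominated_convergence (fun v => ‖φ v‖) ?_ ?_ hφ.norm ?_
  · filter_upwards [ha] with i hi
    exact (Complex.continuous_exp.comp_aestronglyMeasurable hi).smul hφ.aestronglyMeasurable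
  · filter_upwards [hre] with i hi
    filter_upwards [hi] with v hv
    rw [norm_smul, Complex.norm_exp]
    exact mul_le_of_le_one_left (norm_nonneg _) (Real.exp_le_one_iff.mpr hv)
  · filter_upwards [hlim] with v hv
    exact hv.cexp.smul_const _

end DominatedConvergence

lemma mem_slitPlane_of_re_nonneg {z : ℂ} (hz : 0 ≤ z.re) (hz₀ : z ≠ 0) :
    z ∈ Complex.slitPlane := by
  rw [Complex.mem_slitPlane_iff]
  by_contra! h
  exact hz₀ (Complex.ext (h.1.antisymm hz) h.2)

lemma inv_re_nonneg {z : ℂ} (hz : 0 ≤ z.re) : 0 ≤ z⁻¹.re := by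
  rw [Complex.inv_re]
  exact div_nonneg hz (Complex.normSq_nonneg z)

section GaussianPairing

variable {V E : Type*} [NormedAddCommGroup V] [InnerProductSpace ℝ V] [FiniteDimensional ℝ V]
  [MeasurableSpace V] [BorelSpace V] [NormedAddCommGroup E] [NormedSpace ℂ E]

lemma integral_fourier_smul_eq [CompleteSpace E] {g : V → ℂ} {h : V → E} (hg : Integrable g)
    (hh : Integrable h) : ∫ v, 𝓕 g v • h v = ∫ v, g v • 𝓕 h v := by
  have := VectorFourier.integral_fourierIntegral_smul_eq_flip (L := innerₗ V)
    Real.continuous_fourierChar continuous_inner hg hh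
  rwa [flip_innerₗ] at this

lemma integral_gaussian_smul_fourier_of_re_pos [CompleteSpace E] {b : ℂ} (hb : 0 < b.re) (x : V)
    {h : V → E} (hh : Integrable h) :
    ∫ v, Complex.exp (-b * ‖v‖ ^ 2 + 2 * π * I * ⟪x, v⟫) • 𝓕 h v =
      (π / b) ^ (Module.finrank ℝ V / 2 : ℂ) •
        ∫ v, Complex.exp (-π ^ 2 * ‖x - v‖ ^ 2 / b) • h v := by
  rw [← integral_fourier_smul_eq
    (GaussianFourier.integrable_cexp_neg_mul_sq_norm_add hb (2 * π * I) x) hh, ← integral_smul]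
  simp_rw [fourier_gaussian_innerProductSpace' hb, smul_smul]

lemma tendsto_integral_modulated_gaussian_smul {b : ℂ} (x : V) {g : V → E} (hg : Integrable g) :
    Tendsto (fun c : ℂ => ∫ v, Complex.exp (-c * ‖v‖ ^ 2 + 2 * π * I * ⟪x, v⟫) • g v)
      (𝓝[{c | 0 < c.re}] b)
      (𝓝 (∫ v, Complex.exp (-b * ‖v‖ ^ 2 + 2 * π * I * ⟪x, v⟫) • g v)) := by
  refine tendsto_integral_cexp_smul hg
    (.of_forall fun c => Continuous.aestronglyMeasurable (by fun_prop)) ?_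
    (.of_forall fun v => Continuous.tendsto' (by fun_prop) _ _ rfl |>.mono_left nhdsWithin_le_nhds)
  filter_upwards [self_mem_nhdsWithin] with c (hc : 0 < c.re)
  refine .of_forall fun v => ?_
  have hre : (-c * ‖v‖ ^ 2 + 2 * π * I * ⟪x, v⟫ : ℂ).re = -(c.re * ‖v‖ ^ 2) := by
    simp [← Complex.ofReal_pow]
  rw [hre]
  exact neg_nonpos.mpr (by positivity)

lemma tendsto_integral_inv_gaussian_smul {b : ℂ} (hb₀ : b ≠ 0) (x : V) {h : V → E}
    (hh : Integrable h) :
    Tendsto (fun c : ℂ => ∫ v, Complex.exp (-π ^ 2 * ‖x - v‖ ^ 2 / c) • h v)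
      (𝓝[{c | 0 < c.re}] b) (𝓝 (∫ v, Complex.exp (-π ^ 2 * ‖x - v‖ ^ 2 / b) • h v)) := by
  refine tendsto_integral_cexp_smul hh
    (.of_forall fun c => Continuous.aestronglyMeasurable (by fun_prop)) ?_
    (.of_forall fun v => (tendsto_const_nhds.div tendsto_id hb₀).mono_left nhdsWithin_le_nhds)
  filter_upwards [self_mem_nhdsWithin] with c (hc : 0 < c.re)
  refine .of_forall fun v => ?_
  have hexp : (-π ^ 2 * ‖x - v‖ ^ 2 / c : ℂ) = (-(π ^ 2 * ‖x - v‖ ^ 2) : ℝ) * c⁻¹ := by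
    push_cast
    ring
  rw [hexp, Complex.re_ofReal_mul]
  exact mul_nonpos_of_nonpos_of_nonneg (neg_nonpos.mpr (by positivity)) (inv_re_nonneg hc.le)

lemma integral_gaussian_smul_fourier [CompleteSpace E] {b : ℂ} (hb : 0 ≤ b.re) (hb₀ : b ≠ 0)
    (x : V) {h : V → E} (hh : Integrable h) (hFh : Integrable (𝓕 h)) :
    ∫ v, Complex.exp (-b * ‖v‖ ^ 2 + 2 * π * I * ⟪x, v⟫) • 𝓕 h v =
      (π / b) ^ (Module.finrank ℝ V / 2 : ℂ) •
        ∫ v, Complex.exp (-π ^ 2 * ‖x - v‖ ^ 2 / b) • h v := by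
  have : (𝓝[{c : ℂ | 0 < c.re}] b).NeBot := by
    rwa [← mem_closure_iff_nhdsWithin_neBot, Complex.closure_setOfPred_lt_re]
  have hslit : (π / b : ℂ) ∈ Complex.slitPlane := by
    refine mem_slitPlane_of_re_nonneg ?_
      (div_ne_zero (Complex.ofReal_ne_zero.mpr Real.pi_ne_zero) hb₀)
    rw [div_eq_mul_inv, Complex.re_ofReal_mul]
    exact mul_nonneg Real.pi_pos.le (inv_re_nonneg hb)
  have hconst : Tendsto (fun c : ℂ => (π / c) ^ (Module.finrank ℝ V / 2 : ℂ))
      (𝓝[{c | 0 < c.re}] b) (𝓝 ((π / b) ^ (Module.finrank ℝ V / 2 : ℂ))) :=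
    ((tendsto_const_nhds.div tendsto_id hb₀).cpow tendsto_const_nhds hslit).mono_left
      nhdsWithin_le_nhds
  refine tendsto_nhds_unique_of_eventuallyEq (tendsto_integral_modulated_gaussian_smul x hFh)
    (hconst.smul (tendsto_integral_inv_gaussian_smul hb₀ x hh)) ?_
  filter_upwards [self_mem_nhdsWithin] with c hc
  exact integral_gaussian_smul_fourier_of_re_pos hc x hh

lemma integral_fresnel_smul_fourier [CompleteSpace E] {t : ℝ} (ht : t ≠ 0) (x : V) {h : V → E}
    (hh : Integrable h) (hFh : Integrable (𝓕 h)) :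
    ∫ v, Complex.exp (-(π * I / t) * ‖v‖ ^ 2 + 2 * π * I * ⟪x, v⟫) • 𝓕 h v =
      (t / I) ^ (Module.finrank ℝ V / 2 : ℂ) •
        ∫ v, Complex.exp ((π * t * ‖x - v‖ ^ 2 : ℝ) * I) • h v := by
  have hπ : (π : ℂ) ≠ 0 := Complex.ofReal_ne_zero.mpr Real.pi_ne_zero
  have ht' : (t : ℂ) ≠ 0 := Complex.ofReal_ne_zero.mpr ht
  have hre : (π * I / t : ℂ).re = 0 := by
    rw [mul_div_right_comm, ← Complex.ofReal_div, Complex.re_ofReal_mul, Complex.I_re, mul_zero]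
  have hbase : (π / (π * I / t) : ℂ) = t / I := by
    field_simp
  have hexp (v : V) : (-π ^ 2 * ‖x - v‖ ^ 2 / (π * I / t) : ℂ) =
      (π * t * ‖x - v‖ ^ 2 : ℝ) * I := by
    push_cast
    field_simp
    simp
  rw [integral_gaussian_smul_fourier hre.ge (by simp [ht']) x hh hFh, hbase]
  simp_rw [hexp]

end GaussianPairing

lemma fracH_eq_integral_fresnel (β : ℝ) (f : Plane → ℂ) (ρ' : Plane) :
    fracH β f ρ' = I * Real.exp β / Real.sinh β *
      Complex.exp ((-(π * ‖ρ'‖ ^ 2 / Real.tanh β) : ℝ) * I) *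
      ∫ ρ, Complex.exp (-(π * I / Real.tanh β) * ‖ρ‖ ^ 2 +
        2 * π * I * ⟪(Real.sinh β)⁻¹ • ρ', ρ⟫) • f ρ := by
  have hcoth (x : Plane) : (-(I * π * ‖x‖ ^ 2 * (Real.cosh β / Real.sinh β)) : ℂ) =
      -(π * I / Real.tanh β) * ‖x‖ ^ 2 := by
    rw [Real.tanh_eq_sinh_div_cosh, Complex.ofReal_div, div_div_eq_mul_div]
    ring
  have hchirp : (-(π * I / Real.tanh β) * ‖ρ'‖ ^ 2 : ℂ) =
      (-(π * ‖ρ'‖ ^ 2 / Real.tanh β) : ℝ) * I := by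
    push_cast
    ring
  have hmodulation (ρ : Plane) : (2 * π * I * ⟪ρ', ρ⟫ / Real.sinh β : ℂ) =
      2 * π * I * ⟪(Real.sinh β)⁻¹ • ρ', ρ⟫ := by
    rw [real_inner_smul_left, Complex.ofReal_mul, Complex.ofReal_inv]
    ring
  simp_rw [fracH, hcoth, hchirp, hmodulation, ← Complex.exp_add, smul_eq_mul]

/-- The phase of the oscillatory integral of `h` that represents `H_β[𝓕 h](ρ')`; for `β = 0` it is
the phase of the Fourier integral at `ρ'`. -/
def fracHPhase (β : ℝ) (ρ' v : Plane) : ℝ :=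
  π * (Real.tanh β * (‖v‖ ^ 2 - ‖ρ'‖ ^ 2) - 2 * ⟪v, ρ'⟫ / Real.cosh β)

namespace fracHPhase

lemma zero_left (ρ' v : Plane) : fracHPhase 0 ρ' v = -2 * π * ⟪v, ρ'⟫ := by
  simp only [fracHPhase, Real.tanh_zero, Real.cosh_zero]
  ring

lemma continuous_left (ρ' v : Plane) : Continuous fun β => fracHPhase β ρ' v := by
  have hcosh (β : ℝ) : Real.cosh β ≠ 0 := (Real.cosh_pos β).ne'
  simp only [fracHPhase, Real.tanh_eq_sinh_div_cosh]
  fun_prop (disch := exact hcosh _)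

lemma continuous_right (β : ℝ) (ρ' : Plane) : Continuous (fracHPhase β ρ') := by
  unfold fracHPhase
  fun_prop

lemma eq_fresnel {β : ℝ} (hβ : β ≠ 0) (ρ' v : Plane) :
    fracHPhase β ρ' v = -(π * ‖ρ'‖ ^ 2 / Real.tanh β) +
      π * Real.tanh β * ‖(Real.sinh β)⁻¹ • ρ' - v‖ ^ 2 := by
  have hs : Real.sinh β ≠ 0 := Real.sinh_ne_zero.mpr hβ
  have hc : Real.cosh β ≠ 0 := (Real.cosh_pos β).ne'
  rw [fracHPhase, norm_sub_sq_real, norm_smul, mul_pow, Real.norm_eq_abs, sq_abs,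
    real_inner_smul_left, real_inner_comm, Real.tanh_eq_sinh_div_cosh]
  field_simp
  rw [Real.cosh_sq]
  ring

end fracHPhase

lemma fracH_fourier {β : ℝ} (hβ : β ≠ 0) {h : Plane → ℂ} (hh : Integrable h)
    (hFh : Integrable (𝓕 h)) (ρ' : Plane) :
    fracH β (𝓕 h) ρ' = (Real.exp β / Real.cosh β : ℝ) *
      ∫ v, Complex.exp (fracHPhase β ρ' v * I) • h v := by
  have hs : (Real.sinh β : ℂ) ≠ 0 := Complex.ofReal_ne_zero.mpr (Real.sinh_ne_zero.mpr hβ)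
  have hc : (Real.cosh β : ℂ) ≠ 0 := Complex.ofReal_ne_zero.mpr (Real.cosh_pos β).ne'
  have ht : Real.tanh β ≠ 0 := by
    rw [Real.tanh_eq_sinh_div_cosh]
    exact div_ne_zero (Real.sinh_ne_zero.mpr hβ) (Real.cosh_pos β).ne'
  have hprefactor : I * Real.exp β / Real.sinh β * (Real.tanh β / I) =
      (Real.exp β / Real.cosh β : ℝ) := by
    rw [Real.tanh_eq_sinh_div_cosh, Complex.ofReal_div, Complex.ofReal_div]
    field_simp
  have hphase (v : Plane) : Complex.exp (fracHPhase β ρ' v * I) =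
      Complex.exp ((-(π * ‖ρ'‖ ^ 2 / Real.tanh β) : ℝ) * I) *
        Complex.exp ((π * Real.tanh β * ‖(Real.sinh β)⁻¹ • ρ' - v‖ ^ 2 : ℝ) * I) := by
    rw [fracHPhase.eq_fresnel hβ, Complex.ofReal_add, add_mul, Complex.exp_add]
  rw [fracH_eq_integral_fresnel, integral_fresnel_smul_fourier ht _ hh hFh, ← hprefactor]
  simp_rw [hphase, mul_smul, integral_smul, finrank_euclideanSpace_fin, smul_eq_mul]
  norm_num only [div_self, Complex.cpow_one]
  ring

lemma tendsto_fracH_fourier {h : Plane → ℂ} (hh : Integrable h) (hFh : Integrable (𝓕 h))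
    (ρ' : Plane) : Tendsto (fun β => fracH β (𝓕 h) ρ') (𝓝[≠] 0) (𝓝 (𝓕 h ρ')) := by
  have hprefactor : Tendsto (fun β : ℝ => ((Real.exp β / Real.cosh β : ℝ) : ℂ)) (𝓝 0) (𝓝 1) := by
    have hcont : Continuous fun β : ℝ => Real.exp β / Real.cosh β :=
      Real.continuous_exp.div Real.continuous_cosh fun β => (Real.cosh_pos β).ne'
    exact (Complex.continuous_ofReal.comp hcont).tendsto' 0 1 (by simp)
  have hintegral : Tendsto (fun β => ∫ v, Complex.exp (fracHPhase β ρ' v * I) • h v) (𝓝 0)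
      (𝓝 (𝓕 h ρ')) := by
    simp_rw [Real.fourier_eq', ← fracHPhase.zero_left]
    refine tendsto_integral_cexp_smul hh (.of_forall fun β => ?_)
      (.of_forall fun β => .of_forall fun v => ?_) (.of_forall fun v => ?_)
    · have := fracHPhase.continuous_right β ρ'
      exact Continuous.aestronglyMeasurable (by fun_prop)
    · rw [Complex.re_ofReal_mul, Complex.I_re, mul_zero]
    · have := fracHPhase.continuous_left ρ' v
      exact Continuous.tendsto (by fun_prop) 0
  have hlim := (hprefactor.mul hintegral).mono_left (nhdsWithin_le_nhds (s := {0}ᶜ))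
  rw [one_mul] at hlim
  refine hlim.congr' ?_
  filter_upwards [self_mem_nhdsWithin] with β hβ
  exact (fracH_fourier hβ hh hFh ρ').symm

theorem stmt18_general {f : Plane → ℂ} (hf : Continuous f) (hfi : Integrable f)
    (hFf : Integrable (𝓕 f)) (ρ' : Plane) :
    Tendsto (fun β => fracH β f ρ') (𝓝[≠] 0) (𝓝 (f ρ')) := by
  have hinv : 𝓕 (𝓕⁻ f) = f := hf.fourier_fourierInv_eq hfi hFf
  have hinvi : Integrable (𝓕⁻ f) := by
    rw [funext (Real.fourierInv_eq_fourier_neg f)]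
    exact hFf.comp_neg
  have hlim := tendsto_fracH_fourier hinvi (hinv.symm ▸ hfi) ρ'
  rwa [hinv] at hlim

/-- `H_β[f](ρ') → f(ρ')` as `β → 0` through nonzero values: `H_0 = 𝓘` in the limit sense. -/
theorem stmt18 (f : SchwartzMap Plane ℂ) (ρ' : Plane) :
    Tendsto (fun β : ℝ => fracH β (⇑f) ρ')
      (nhdsWithin 0 {(0 : ℝ)}ᶜ) (nhds (f ρ')) := by
  have hFf : Integrable (𝓕 (f : Plane → ℂ)) := SchwartzMap.fourier_coe f ▸ (𝓕 f).integrable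
  exact stmt18_general f.continuous f.integrable hFf ρ'

end
end
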